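/- arXiv:2306.17800 — 2 statements merged into one kernel-verified Lean document; each statement's English description precedes it below -/
import Mathlib

section
/- Chen's identity for the interval-partition signature: for all 𝔰, 𝔏, 𝔐 ∈ IPs, ⟨IPC(𝔏 • 𝔐), 𝔰⟩ = Σ ⟨IPC(𝔏), 𝔞⟩ · ⟨IPC(𝔐), 𝔟⟩, the sum running over all factorizations 𝔰 = 𝔞 • 𝔟 with 𝔞, 𝔟 ∈ IPs (allowing empty factors). -/
/-!
Let `l` and `m` be the sizes of `L` and `M`. Subsets `A` of the ground set of `L • M` correspond to
pairs `(A₁, A₂)` of subsets of the ground sets of `L` and `M` via `A = A₁ ∪ (A₂ + l)` (`joinSet`).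
A block of `L • M` lies entirely in one of the two parts, so although a clique of `A` may straddle
the cut at `l`, its traces on the blocks do not: `(L • M)(A)` is the union of `L(A₁)` and of
`M(A₂)` shifted by `l` (`restrictIP_concat`). Standardization turns this union into the
concatenation `std L(A₁) • std M(A₂)` (`stdIP_union_shift`).

A standardized `s` refines a concatenation `a' • b'` iff `s = a • b` with `a ≤ a'` and `b ≤ b'`
(`IPle_concat_iff`), and such a factorization is determined by the size of `a`
(`concat_injective`), which here is `|A₁|`. Hence the sets `A` counted on the left are the disjoint
union, over the factorizations of `s`, of the products of the sets counted on the right.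
-/

open Set

/-- A block: a nonempty interval of consecutive positive integers. -/
def IsIntervalBlock (B : Set ℕ) : Prop :=
  B.Nonempty ∧ (∀ x ∈ B, 1 ≤ x) ∧
    ∀ x ∈ B, ∀ z ∈ B, ∀ y : ℕ, x ≤ y → y ≤ z → y ∈ B

/-- An interval partition of a finite subset of the positive integers:
a family of pairwise disjoint nonempty intervals with finite ground set. -/
def IsIntervalPartition (P : Set (Set ℕ)) : Prop :=
  (⋃₀ P).Finite ∧ (∀ B ∈ P, IsIntervalBlock B) ∧
    ∀ B ∈ P, ∀ C ∈ P, B ≠ C → B ∩ C = ∅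

/-- An interval partition with prescribed ground set `A`. -/
def IsIntervalPartitionOf (P : Set (Set ℕ)) (A : Set ℕ) : Prop :=
  IsIntervalPartition P ∧ ⋃₀ P = A

/-- Standardized interval partitions: interval partitions of `{1, …, n}`. -/
def IsStdIP (P : Set (Set ℕ)) : Prop :=
  IsIntervalPartition P ∧ ∃ n : ℕ, ⋃₀ P = Set.Icc 1 n

/-- Refinement order: same ground set, and every block of `P`
is contained in some block of `Q`. -/
def IPle (P Q : Set (Set ℕ)) : Prop :=
  ⋃₀ P = ⋃₀ Q ∧ ∀ B ∈ P, ∃ C ∈ Q, B ⊆ C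

/-- The equivalence relation on blocks generated by having nonempty
intersection (among members of `S`). -/
def glueRel (S : Set (Set ℕ)) : Set ℕ → Set ℕ → Prop :=
  Relation.EqvGen fun X Y => X ∈ S ∧ Y ∈ S ∧ (X ∩ Y).Nonempty

/-- Gluing of two interval partitions. -/
def glue (P Q : Set (Set ℕ)) : Set (Set ℕ) :=
  (fun T => ⋃₀ {X ∈ P ∪ Q | glueRel (P ∪ Q) T X}) '' (P ∪ Q)

/-- The relation on `A` generated by `y = x + 1`. -/
def cliqueRel (A : Set ℕ) : ℕ → ℕ → Prop :=
  Relation.EqvGen fun x y => x ∈ A ∧ y ∈ A ∧ y = x + 1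

/-- `cliques A`: the coarsest interval partition of `A`. -/
def cliques (A : Set ℕ) : Set (Set ℕ) :=
  (fun x => {y ∈ A | cliqueRel A x y}) '' A

/-- `𝓘(A)`: the interval partition of `A ∩ ⋃₀ 𝓘` induced by `𝓘`. -/
def restrictIP (P : Set (Set ℕ)) (A : Set ℕ) : Set (Set ℕ) :=
  {Z | Z ≠ ∅ ∧ ∃ B ∈ P, ∃ c ∈ cliques A, Z = B ∩ c}

/-- The unique order preserving map sending a finite `S ⊆ ℕ` onto `{1,…,|S|}`. -/
noncomputable def stdMap (S : Set ℕ) (x : ℕ) : ℕ := {y ∈ S | y ≤ x}.ncard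

/-- Standardization of an interval partition. -/
noncomputable def stdIP (P : Set (Set ℕ)) : Set (Set ℕ) :=
  (fun B => stdMap (⋃₀ P) '' B) '' P

/-- Shifting all blocks of a partition up by `m`. -/
def shiftIP (m : ℕ) (P : Set (Set ℕ)) : Set (Set ℕ) :=
  (fun B => (fun x => x + m) '' B) '' P

/-- Concatenation of standardized interval partitions. -/
noncomputable def concatIP (P Q : Set (Set ℕ)) : Set (Set ℕ) :=
  P ∪ shiftIP (⋃₀ P).ncard Q

/-- Quasi-shuffle section coefficient `c(𝔰,𝔱;𝔤)`. -/
noncomputable def secCoeff (s t g : Set (Set ℕ)) : ℕ :=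
  {p : Set ℕ × Set ℕ | p.1 ∪ p.2 = ⋃₀ g ∧
      ∃ I I' : Set (Set ℕ), IsIntervalPartitionOf I p.1 ∧ IsIntervalPartitionOf I' p.2 ∧
        stdIP I = s ∧ stdIP I' = t ∧ glue I I' = g}.ncard

/-- The signature pairing `⟨IPC(𝔏), 𝔰⟩`. -/
noncomputable def IPC (L s : Set (Set ℕ)) : ℕ :=
  {A : Set ℕ | A ⊆ ⋃₀ L ∧ IPle s (stdIP (restrictIP L A))}.ncard

open Classical in
/-- The unique refinement `𝓘_𝔰` of `𝓘` with standardization `𝔰` (junk value otherwise). -/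
noncomputable def refineTo (P s : Set (Set ℕ)) : Set (Set ℕ) :=
  if h : ∃ Q : Set (Set ℕ), IsIntervalPartition Q ∧ IPle Q P ∧ stdIP Q = s then h.choose
  else ∅

/-- The concatenation of single blocks of the sizes listed in `l`. -/
noncomputable def concatList (l : List ℕ) : Set (Set ℕ) :=
  l.foldl (fun acc m => concatIP acc {Set.Icc 1 m}) ∅

/-- A permutation of `{1,…,n}`, encoded as a function on `ℕ` fixing everything else. -/
def IsPermOf (n : ℕ) (σ : ℕ → ℕ) : Prop :=
  Set.BijOn σ (Set.Icc 1 n) (Set.Icc 1 n) ∧ ∀ x : ℕ, x ∉ Set.Icc 1 n → σ x = x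

open Classical in
/-- The `i`-th smallest element of `A` (junk value otherwise). -/
noncomputable def nthElt (A : Set ℕ) (i : ℕ) : ℕ :=
  if h : ∃ x ∈ A, stdMap A x = i then h.choose else 0

/-- Standardization `st(Λ|_A)` of `Λ` restricted to `A`: the permutation of `{1,…,|A|}`
recording the relative order of the values of `Λ` on `A`. -/
noncomputable def stdRestrict (lam : ℕ → ℕ) (A : Set ℕ) : ℕ → ℕ := fun i =>
  if 1 ≤ i ∧ i ≤ A.ncard then {b ∈ A | lam b ≤ lam (nthElt A i)}.ncard else i

/-- Concatenation `σ ⊡ τ` of permutations of `{1,…,m}` and `{1,…,n}`. -/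
def permConcat (m n : ℕ) (σ τ : ℕ → ℕ) : ℕ → ℕ := fun i =>
  if 1 ≤ i ∧ i ≤ m then σ i
  else if m + 1 ≤ i ∧ i ≤ m + n then τ (i - m) + m
  else i

/-- A vincular pattern: a standardized interval partition of `{1,…,n}`
together with a permutation of `{1,…,n}`. -/
def IsVincular (p : Set (Set ℕ) × (ℕ → ℕ)) : Prop :=
  ∃ n : ℕ, IsIntervalPartitionOf p.1 (Set.Icc 1 n) ∧ IsPermOf n p.2

/-- Concatenation of vincular patterns. -/
noncomputable def vincConcat (p q : Set (Set ℕ) × (ℕ → ℕ)) : Set (Set ℕ) × (ℕ → ℕ) :=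
  (concatIP p.1 q.1, permConcat (⋃₀ p.1).ncard (⋃₀ q.1).ncard p.2 q.2)

/-- Vincular section coefficient `C((𝔰,σ),(𝔱,τ);(𝔤,γ))`. -/
noncomputable def vincCoeff (p q r : Set (Set ℕ) × (ℕ → ℕ)) : ℕ :=
  {AB : Set ℕ × Set ℕ | AB.1 ∪ AB.2 = ⋃₀ r.1 ∧
      (∃ I I' : Set (Set ℕ), IsIntervalPartitionOf I AB.1 ∧ IsIntervalPartitionOf I' AB.2 ∧
        stdIP I = p.1 ∧ stdIP I' = q.1 ∧ glue I I' = r.1) ∧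
      stdRestrict r.2 AB.1 = p.2 ∧ stdRestrict r.2 AB.2 = q.2}.ncard

/-- Vincular signature pairing `⟨GPC(𝔏,Λ), (𝔰,σ)⟩`. -/
noncomputable def GPC (L : Set (Set ℕ)) (lam : ℕ → ℕ) (p : Set (Set ℕ) × (ℕ → ℕ)) : ℕ :=
  {A : Set ℕ | A ⊆ ⋃₀ L ∧ IPle p.1 (stdIP (restrictIP L A)) ∧ stdRestrict lam A = p.2}.ncard

/-! ### Cliques and the blocks of a restriction -/

/-- Two elements of `A` lie in the same clique iff all integers between them belong to `A`. -/
lemma cliqueRel_iff {A : Set ℕ} {x y : ℕ} (hx : x ∈ A) (hy : y ∈ A) :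
    cliqueRel A x y ↔ uIcc x y ⊆ A := by
  constructor
  · intro h
    -- The reflexive case has to be kept apart: it says nothing about membership in `A`.
    have key : x = y ∨ uIcc x y ⊆ A := by
      clear hx hy
      induction h with
      | rel a b h =>
        right
        obtain ⟨ha, hb, rfl⟩ := h
        intro z hz
        rw [mem_uIcc] at hz
        have : z = a ∨ z = a + 1 := by omega
        rcases this with rfl | rfl <;> assumption
      | refl a => exact Or.inl rfl
      | symm a b _ ih =>
        rw [uIcc_comm, eq_comm]; exact ih
      | trans a b c _ _ ih1 ih2 =>
        rcases ih1 with rfl | ih1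
        · exact ih2
        rcases ih2 with rfl | ih2
        · exact Or.inr ih1
        exact Or.inr (uIcc_subset_uIcc_union_uIcc.trans (union_subset ih1 ih2))
    rcases key with rfl | h
    · simpa using hx
    · exact h
  · have up : ∀ k a : ℕ, Icc a (a + k) ⊆ A → cliqueRel A a (a + k) := by
      intro k
      induction k with
      | zero => intro a _; exact Relation.EqvGen.refl _
      | succ k ih =>
        intro a h
        refine Relation.EqvGen.trans _ _ _
          (ih a ((Icc_subset_Icc_right (by omega)).trans h)) (Relation.EqvGen.rel _ _ ?_)
        exact ⟨h ⟨by omega, by omega⟩, h ⟨by omega, by omega⟩, by omega⟩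
    intro h
    rcases le_total x y with hxy | hxy
    · obtain ⟨k, rfl⟩ := Nat.exists_eq_add_of_le hxy
      rw [uIcc_of_le hxy] at h
      exact up k x h
    · obtain ⟨k, rfl⟩ := Nat.exists_eq_add_of_le hxy
      rw [uIcc_of_ge hxy] at h
      exact Relation.EqvGen.symm _ _ (up k y h)

/-- The blocks of `P(A)`, described through the elements `x ∈ B ∩ A` they contain. -/
lemma mem_restrictIP {P : Set (Set ℕ)} {A Z : Set ℕ} :
    Z ∈ restrictIP P A ↔ ∃ B ∈ P, ∃ x ∈ B, x ∈ A ∧ Z = {y | y ∈ B ∧ uIcc x y ⊆ A} := by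
  constructor
  · rintro ⟨hne, B, hB, c, ⟨x, hx, rfl⟩, rfl⟩
    obtain ⟨z, hzB, hzA, hxz⟩ := nonempty_iff_ne_empty.mpr hne
    refine ⟨B, hB, z, hzB, hzA, ?_⟩
    ext y
    constructor
    · rintro ⟨hyB, hyA, hxy⟩
      refine ⟨hyB, (cliqueRel_iff hzA hyA).1 ?_⟩
      exact Relation.EqvGen.trans _ _ _ (Relation.EqvGen.symm _ _ hxz) hxy
    · rintro ⟨hyB, h⟩
      have hyA : y ∈ A := h right_mem_uIcc
      refine ⟨hyB, hyA, ?_⟩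
      exact Relation.EqvGen.trans _ _ _ hxz ((cliqueRel_iff hzA hyA).2 h)
  · rintro ⟨B, hB, x, hxB, hxA, rfl⟩
    refine ⟨?_, B, hB, _, ⟨x, hxA, rfl⟩, ?_⟩
    · refine nonempty_iff_ne_empty.mp ⟨x, hxB, ?_⟩
      simpa using hxA
    · ext y
      constructor
      · rintro ⟨hyB, h⟩
        have hyA : y ∈ A := h right_mem_uIcc
        exact ⟨hyB, hyA, (cliqueRel_iff hxA hyA).2 h⟩
      · rintro ⟨hyB, hyA, h⟩
        exact ⟨hyB, (cliqueRel_iff hxA hyA).1 h⟩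

lemma sUnion_restrictIP {P : Set (Set ℕ)} {A : Set ℕ} (hA : A ⊆ ⋃₀ P) :
    ⋃₀ restrictIP P A = A := by
  ext x
  constructor
  · rintro ⟨Z, hZ, hx⟩
    obtain ⟨B, hB, z, hzB, hzA, rfl⟩ := mem_restrictIP.1 hZ
    exact hx.2 right_mem_uIcc
  · intro hx
    obtain ⟨B, hB, hxB⟩ := hA hx
    exact ⟨_, mem_restrictIP.2 ⟨B, hB, x, hxB, hx, rfl⟩, hxB, by simpa using hx⟩

/-! ### Ground sets of shifts, concatenations and standardizations -/

lemma sUnion_shiftIP (m : ℕ) (P : Set (Set ℕ)) :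
    ⋃₀ shiftIP m P = (fun x => x + m) '' ⋃₀ P := by
  rw [shiftIP, sUnion_image, sUnion_eq_biUnion, image_iUnion₂]

/-- The subset of the ground set of `L • M` with parts `A₁` and `A₂`, where `L` has size `l`. -/
def joinSet (l : ℕ) (A₁ A₂ : Set ℕ) : Set ℕ := A₁ ∪ (fun x => x + l) '' A₂

lemma sUnion_union_shiftIP (m : ℕ) (P Q : Set (Set ℕ)) :
    ⋃₀ (P ∪ shiftIP m Q) = joinSet m (⋃₀ P) (⋃₀ Q) := by
  rw [sUnion_union, sUnion_shiftIP, joinSet]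

lemma joinSet_Icc (p q : ℕ) : joinSet p (Icc 1 p) (Icc 1 q) = Icc 1 (p + q) := by
  ext x
  simp only [joinSet, mem_union, mem_Icc, mem_image]
  constructor
  · rintro (h | ⟨y, h, rfl⟩) <;> omega
  · intro h
    by_cases hx : x ≤ p
    · exact Or.inl ⟨h.1, hx⟩
    · exact Or.inr ⟨x - p, by omega, by omega⟩

lemma mem_joinSet_left {l x : ℕ} {A₁ A₂ : Set ℕ} (h2 : ∀ y ∈ A₂, 1 ≤ y) (hx : x ≤ l) :
    x ∈ joinSet l A₁ A₂ ↔ x ∈ A₁ := by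
  constructor
  · rintro (h | ⟨y, hy, rfl⟩)
    · exact h
    · have := h2 y hy
      simp only at hx
      omega
  · exact Or.inl

lemma mem_joinSet_right {l x : ℕ} {A₁ A₂ : Set ℕ} (h1 : A₁ ⊆ Icc 1 l) (hx : 1 ≤ x) :
    x + l ∈ joinSet l A₁ A₂ ↔ x ∈ A₂ := by
  constructor
  · rintro (h | ⟨y, hy, h⟩)
    · have := (h1 h).2
      omega
    · simp only [Nat.add_right_cancel_iff] at h
      exact h ▸ hy
  · exact fun h => Or.inr ⟨x, h, rfl⟩

lemma ncard_Icc_one (n : ℕ) : (Icc 1 n).ncard = n := by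
  rw [← Finset.coe_Icc, ncard_coe_finset, Nat.card_Icc]; omega

lemma stdMap_image {U : Set ℕ} (hU : U.Finite) : stdMap U '' U = Icc 1 U.ncard := by
  have hmono : StrictMonoOn (stdMap U) U := by
    intro x hx y hy hxy
    refine ncard_lt_ncard ?_ (hU.subset (sep_subset _ _))
    have hsub : {z ∈ U | z ≤ x} ⊆ {z ∈ U | z ≤ y} := fun z hz => ⟨hz.1, hz.2.trans hxy.le⟩
    exact (ssubset_iff_of_subset hsub).2 ⟨y, ⟨hy, le_rfl⟩, fun h => absurd h.2 (not_le.2 hxy)⟩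
  refine eq_of_subset_of_ncard_le ?_ ?_ (finite_Icc _ _)
  · rintro _ ⟨x, hx, rfl⟩
    refine ⟨?_, ncard_le_ncard (sep_subset _ _) hU⟩
    exact (ncard_pos (hU.subset (sep_subset _ _))).2 ⟨x, hx, le_rfl⟩
  · rw [ncard_Icc_one, hmono.injOn.ncard_image]

lemma sUnion_stdIP {P : Set (Set ℕ)} (h : (⋃₀ P).Finite) :
    ⋃₀ stdIP P = Icc 1 (⋃₀ P).ncard := by
  rw [← stdMap_image h, stdIP, sUnion_image]
  conv_rhs => rw [sUnion_eq_biUnion (s := P)]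
  rw [image_iUnion₂, ← sUnion_eq_biUnion]

/-! ### Compatibility of restriction and standardization with concatenation -/

/-- No block of `(L • M)(A)` straddles the cut at `l`, because no block of `L • M` does. -/
lemma restrictIP_concat {l : ℕ} {L M : Set (Set ℕ)} {A₁ A₂ : Set ℕ}
    (hLl : ⋃₀ L ⊆ Icc 1 l) (hM : ∀ B ∈ M, IsIntervalBlock B) (h1 : A₁ ⊆ Icc 1 l) (h2 : ∀ y ∈ A₂, 1 ≤ y) :
    restrictIP (L ∪ shiftIP l M) (joinSet l A₁ A₂)
      = restrictIP L A₁ ∪ shiftIP l (restrictIP M A₂) := by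
  have left : ∀ B ∈ L, ∀ x ∈ B, {y | y ∈ B ∧ uIcc x y ⊆ joinSet l A₁ A₂}
      = {y | y ∈ B ∧ uIcc x y ⊆ A₁} := by
    intro B hB x hx
    ext y
    refine and_congr_right fun hy => forall₂_congr fun z hz => mem_joinSet_left h2 ?_
    have hxl := (hLl ⟨B, hB, hx⟩).2
    have hyl := (hLl ⟨B, hB, hy⟩).2
    rw [mem_uIcc] at hz
    omega
  have right : ∀ B ∈ M, ∀ x ∈ B,
      {y | y ∈ (fun x => x + l) '' B ∧ uIcc (x + l) y ⊆ joinSet l A₁ A₂}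
      = (fun x => x + l) '' {y | y ∈ B ∧ uIcc x y ⊆ A₂} := by
    intro B hB x hx
    have hx1 := (hM B hB).2.1 x hx
    have key : ∀ y ∈ B, (uIcc (x + l) (y + l) ⊆ joinSet l A₁ A₂ ↔ uIcc x y ⊆ A₂) := by
      intro y hy
      have hy1 := (hM B hB).2.1 y hy
      constructor
      · intro h z hz
        rw [mem_uIcc] at hz
        refine (mem_joinSet_right h1 (by omega)).1 (h ?_)
        rw [mem_uIcc]; omega
      · intro h z hz
        rw [mem_uIcc] at hz
        obtain ⟨w, rfl⟩ : ∃ w, z = w + l := ⟨z - l, by omega⟩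
        refine (mem_joinSet_right h1 (by omega)).2 (h ?_)
        rw [mem_uIcc]; omega
    ext y
    constructor
    · rintro ⟨⟨y, hy, rfl⟩, h⟩
      exact ⟨y, ⟨hy, (key y hy).1 h⟩, rfl⟩
    · rintro ⟨y, ⟨hy, h⟩, rfl⟩
      exact ⟨⟨y, hy, rfl⟩, (key y hy).2 h⟩
  ext Z
  constructor
  · intro hZ
    obtain ⟨B, hB | ⟨B, hB, rfl⟩, x, hxB, hxA, rfl⟩ := mem_restrictIP.1 hZ
    · left
      have hxl := (hLl ⟨B, hB, hxB⟩).2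
      exact mem_restrictIP.2 ⟨B, hB, x, hxB, (mem_joinSet_left h2 hxl).1 hxA, left B hB x hxB⟩
    · right
      obtain ⟨x, hx, rfl⟩ := hxB
      have hx1 := (hM B hB).2.1 x hx
      exact ⟨_, mem_restrictIP.2 ⟨B, hB, x, hx, (mem_joinSet_right h1 hx1).1 hxA, rfl⟩,
        (right B hB x hx).symm⟩
  · rintro (hZ | ⟨Z, hZ, rfl⟩)
    · obtain ⟨B, hB, x, hxB, hxA, rfl⟩ := mem_restrictIP.1 hZ
      exact mem_restrictIP.2 ⟨B, Or.inl hB, x, hxB, Or.inl hxA, (left B hB x hxB).symm⟩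
    · obtain ⟨B, hB, x, hxB, hxA, rfl⟩ := mem_restrictIP.1 hZ
      exact mem_restrictIP.2 ⟨_, Or.inr ⟨B, hB, rfl⟩, x + l, ⟨x, hxB, rfl⟩,
        Or.inr ⟨x, hxA, rfl⟩, (right B hB x hxB).symm⟩

lemma stdMap_joinSet_left {l x : ℕ} {U V : Set ℕ} (hV : ∀ y ∈ V, 1 ≤ y) (hx : x ≤ l) :
    stdMap (joinSet l U V) x = stdMap U x := by
  unfold stdMap
  congr 1
  ext y
  constructor
  · rintro ⟨hy, hyx⟩
    exact ⟨(mem_joinSet_left hV (hyx.trans hx)).1 hy, hyx⟩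
  · rintro ⟨hy, hyx⟩
    exact ⟨Or.inl hy, hyx⟩

lemma stdMap_joinSet_right {l x : ℕ} {U V : Set ℕ} (hU : U ⊆ Icc 1 l) (hV : ∀ y ∈ V, 1 ≤ y)
    (hVf : V.Finite) : stdMap (joinSet l U V) (x + l) = stdMap V x + U.ncard := by
  have hUf : U.Finite := (finite_Icc _ _).subset hU
  have hset : {y ∈ joinSet l U V | y ≤ x + l}
      = U ∪ (fun x => x + l) '' {y ∈ V | y ≤ x} := by
    ext y
    constructor
    · rintro ⟨hy | ⟨y, hy, rfl⟩, hyx⟩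
      · exact Or.inl hy
      · exact Or.inr ⟨y, ⟨hy, by simpa using hyx⟩, rfl⟩
    · rintro (hy | ⟨y, ⟨hy, hyx⟩, rfl⟩)
      · exact ⟨Or.inl hy, (hU hy).2.trans (by omega)⟩
      · exact ⟨Or.inr ⟨y, hy, rfl⟩, by simpa using hyx⟩
  have hdisj : Disjoint U ((fun x => x + l) '' {y ∈ V | y ≤ x}) := by
    rw [Set.disjoint_left]
    rintro _ hy ⟨y, ⟨hyV, _⟩, rfl⟩
    have h1 := (hU hy).2
    have h2 := hV y hyV
    simp only at h1
    omega
  rw [stdMap, hset, ncard_union_eq hdisj hUf ((hVf.subset (sep_subset _ _)).image _),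
    ncard_image_of_injective _ (add_left_injective l), stdMap, add_comm]

lemma stdIP_union_shift {l : ℕ} {P Q : Set (Set ℕ)} (hP : ⋃₀ P ⊆ Icc 1 l)
    (hQ : ∀ y ∈ ⋃₀ Q, 1 ≤ y) (hQf : (⋃₀ Q).Finite) :
    stdIP (P ∪ shiftIP l Q) = concatIP (stdIP P) (stdIP Q) := by
  have hPf : (⋃₀ P).Finite := (finite_Icc _ _).subset hP
  rw [concatIP, sUnion_stdIP hPf, ncard_Icc_one]
  conv_lhs => rw [stdIP, sUnion_union_shiftIP, image_union]
  congr 1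
  · refine image_congr fun B hB => image_congr fun x hx => ?_
    exact stdMap_joinSet_left hQ (hP ⟨B, hB, hx⟩).2
  · rw [shiftIP, shiftIP, stdIP, image_image, image_image]
    refine image_congr fun B hB => ?_
    simp only [image_image]
    refine image_congr fun x hx => ?_
    exact stdMap_joinSet_right hP hQ hQf

/-! ### Refinements of a concatenation -/

lemma IPle_concat_iff {s a' b' : Set (Set ℕ)} {p q : ℕ} (hs : IsStdIP s)
    (ha' : ⋃₀ a' = Icc 1 p) (hb' : ⋃₀ b' = Icc 1 q) :
    IPle s (concatIP a' b') ↔ ∃ a b, IsStdIP a ∧ IsStdIP b ∧ concatIP a b = s ∧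
      IPle a a' ∧ IPle b b' := by
  constructor
  · rintro ⟨hU, hle⟩
    rw [concatIP, ha', ncard_Icc_one] at hU hle
    rw [sUnion_union_shiftIP, ha', hb'] at hU
    obtain ⟨⟨hsf, hsB, hsd⟩, -⟩ := hs
    let a : Set (Set ℕ) := {B | B ∈ s ∧ ∃ C ∈ a', B ⊆ C}
    let b : Set (Set ℕ) := {B | (fun x => x + p) '' B ∈ s ∧ ∃ C ∈ b', B ⊆ C}
    have hau : ⋃₀ a = Icc 1 p := by
      apply Subset.antisymm
      · rintro x ⟨B, ⟨-, C, hC, hBC⟩, hx⟩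
        rw [← ha']
        exact ⟨C, hC, hBC hx⟩
      · intro x hx
        have hxs : x ∈ ⋃₀ s := by rw [hU]; exact Or.inl hx
        obtain ⟨B, hB, hxB⟩ := hxs
        obtain ⟨C, hC | ⟨C, hC, rfl⟩, hBC⟩ := hle B hB
        · exact ⟨B, ⟨hB, C, hC, hBC⟩, hxB⟩
        · obtain ⟨y, hy, rfl⟩ := hBC hxB
          have h1 : y ∈ Icc 1 q := hb' ▸ ⟨C, hC, hy⟩
          have h2 := hx.2
          have h3 := h1.1
          simp only at h2
          omega
    -- A block of `s` below a shifted block is itself a shift.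
    have hshift : ∀ B ∈ s, ∀ C ∈ b', B ⊆ (fun x => x + p) '' C →
        ∃ B' ∈ b, B = (fun x => x + p) '' B' := by
      intro B hB C hC hBC
      obtain ⟨B', hB', rfl⟩ := subset_image_iff.1 hBC
      exact ⟨B', ⟨hB, C, hC, hB'⟩, rfl⟩
    have hbu : ⋃₀ b = Icc 1 q := by
      apply Subset.antisymm
      · rintro x ⟨B, ⟨-, C, hC, hBC⟩, hx⟩
        rw [← hb']
        exact ⟨C, hC, hBC hx⟩
      · intro x hx
        have hxs : x + p ∈ ⋃₀ s := by rw [hU]; exact Or.inr ⟨x, hx, rfl⟩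
        obtain ⟨B, hB, hxB⟩ := hxs
        obtain ⟨C, hC | ⟨C, hC, rfl⟩, hBC⟩ := hle B hB
        · have h1 : x + p ∈ Icc 1 p := ha' ▸ ⟨C, hC, hBC hxB⟩
          have h2 := h1.2
          have h3 := hx.1
          omega
        · obtain ⟨B', hB', rfl⟩ := hshift B hB C hC hBC
          obtain ⟨y, hy, hyx⟩ := hxB
          simp only [Nat.add_right_cancel_iff] at hyx
          exact ⟨B', hB', hyx ▸ hy⟩
    refine ⟨a, b, ⟨⟨?_, ?_, ?_⟩, p, hau⟩, ⟨⟨?_, ?_, ?_⟩, q, hbu⟩, ?_, ⟨hau.trans ha'.symm, ?_⟩,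
      ⟨hbu.trans hb'.symm, ?_⟩⟩
    · rw [hau]; exact finite_Icc _ _
    · exact fun B hB => hsB B hB.1
    · exact fun B hB C hC => hsd B hB.1 C hC.1
    · rw [hbu]; exact finite_Icc _ _
    · intro B hB
      obtain ⟨h1, -, h3⟩ := hsB _ hB.1
      refine ⟨h1.of_image, fun x hx => ?_, fun x hx z hz y hxy hyz => ?_⟩
      · have : x ∈ Icc 1 q := hbu ▸ ⟨B, hB, hx⟩
        exact this.1
      · obtain ⟨w, hw, hwy⟩ := h3 (x + p) ⟨x, hx, rfl⟩ (z + p) ⟨z, hz, rfl⟩ (y + p)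
          (by omega) (by omega)
        simp only [Nat.add_right_cancel_iff] at hwy
        exact hwy ▸ hw
    · intro B hB C hC hne
      have := hsd _ hB.1 _ hC.1 (fun h => hne ((add_left_injective p).image_injective h))
      rw [← image_inter (add_left_injective p)] at this
      exact image_eq_empty.1 this
    · rw [concatIP, hau, ncard_Icc_one]
      ext B
      constructor
      · rintro (hB | ⟨B, hB, rfl⟩)
        · exact hB.1
        · exact hB.1
      · intro hB
        obtain ⟨C, hC | ⟨C, hC, rfl⟩, hBC⟩ := hle B hB
        · exact Or.inl ⟨hB, C, hC, hBC⟩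
        · obtain ⟨B', hB', rfl⟩ := hshift B hB C hC hBC
          exact Or.inr ⟨B', hB', rfl⟩
    · exact fun B hB => hB.2
    · exact fun B hB => hB.2
  · rintro ⟨a, b, -, -, rfl, ⟨hau, ha⟩, ⟨hbu, hb⟩⟩
    refine ⟨?_, ?_⟩
    · rw [concatIP, concatIP, sUnion_union_shiftIP, sUnion_union_shiftIP, hau, hbu]
    · rintro B (hB | ⟨B, hB, rfl⟩)
      · obtain ⟨C, hC, h⟩ := ha B hB
        exact ⟨C, Or.inl hC, h⟩
      · obtain ⟨C, hC, h⟩ := hb B hB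
        refine ⟨_, Or.inr ⟨C, hC, rfl⟩, ?_⟩
        rw [hau]
        exact image_mono h

lemma IsStdIP.sUnion_eq {P : Set (Set ℕ)} (h : IsStdIP P) : ⋃₀ P = Icc 1 (⋃₀ P).ncard := by
  obtain ⟨-, n, hn⟩ := h
  rw [hn, ncard_Icc_one]

lemma concat_subset_of_concat_eq {a b c d : Set (Set ℕ)} (ha : IsStdIP a) (hb : IsStdIP b)
    (hc : IsStdIP c) (hd : IsStdIP d) (h : concatIP a b = concatIP c d)
    (hcard : (⋃₀ a).ncard = (⋃₀ c).ncard) : a ⊆ c ∧ b ⊆ d := by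
  have hau := ha.sUnion_eq
  have hcu := hc.sUnion_eq
  rw [← hcard] at hcu
  rw [concatIP, concatIP, ← hcard] at h
  generalize (⋃₀ a).ncard = p at *
  constructor
  · intro B hB
    have hB' : B ∈ c ∪ shiftIP p d := h ▸ Or.inl hB
    rcases hB' with hB' | ⟨C, hC, rfl⟩
    · exact hB'
    · obtain ⟨y, hy⟩ := (hd.1.2.1 C hC).1
      have h1 := (hd.1.2.1 C hC).2.1 y hy
      have h2 : y + p ∈ Icc 1 p := hau ▸ ⟨_, hB, y, hy, rfl⟩
      have h3 := h2.2
      omega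
  · intro B hB
    have hB' : (fun x => x + p) '' B ∈ c ∪ shiftIP p d := h ▸ Or.inr ⟨B, hB, rfl⟩
    rcases hB' with hB' | ⟨C, hC, hCB⟩
    · obtain ⟨y, hy⟩ := (hb.1.2.1 B hB).1
      have h1 := (hb.1.2.1 B hB).2.1 y hy
      have h2 : y + p ∈ Icc 1 p := hcu ▸ ⟨_, hB', y, hy, rfl⟩
      have h3 := h2.2
      omega
    · have : C = B := (add_left_injective p).image_injective hCB
      exact this ▸ hC

/-- A factorization is determined by the size of its first factor. -/
lemma concat_injective {a b c d : Set (Set ℕ)} (ha : IsStdIP a) (hb : IsStdIP b)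
    (hc : IsStdIP c) (hd : IsStdIP d) (h : concatIP a b = concatIP c d)
    (hcard : (⋃₀ a).ncard = (⋃₀ c).ncard) : a = c ∧ b = d := by
  obtain ⟨h1, h2⟩ := concat_subset_of_concat_eq ha hb hc hd h hcard
  obtain ⟨h3, h4⟩ := concat_subset_of_concat_eq hc hd ha hb h.symm hcard.symm
  exact ⟨h1.antisymm h3, h2.antisymm h4⟩

/-! ### Chen's identity -/

/-- The set counted by `⟨IPC(L), s⟩`. -/
def IPCSet (L s : Set (Set ℕ)) : Set (Set ℕ) :=
  {A : Set ℕ | A ⊆ ⋃₀ L ∧ IPle s (stdIP (restrictIP L A))}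

/-- Every set counted by `⟨IPC(L), s⟩` has the size of `s`. -/
lemma ncard_of_mem_IPCSet {L s : Set (Set ℕ)} {A : Set ℕ} (hL : (⋃₀ L).Finite)
    (hA : A ∈ IPCSet L s) : (⋃₀ s).ncard = A.ncard := by
  obtain ⟨h1, h2, -⟩ := hA
  have hr := sUnion_restrictIP h1
  rw [h2, sUnion_stdIP (by rw [hr]; exact hL.subset h1), hr, ncard_Icc_one]

lemma finite_IPCSet {L s : Set (Set ℕ)} (hL : (⋃₀ L).Finite) : (IPCSet L s).Finite :=
  hL.finite_subsets.subset fun _ h => h.1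

lemma joinSet_mem_IPCSet_iff {s L M : Set (Set ℕ)} {A₁ A₂ : Set ℕ}
    (hs : IsStdIP s) (hL : IsStdIP L) (hM : IsStdIP M) (h1 : A₁ ⊆ ⋃₀ L) (h2 : A₂ ⊆ ⋃₀ M) :
    joinSet (⋃₀ L).ncard A₁ A₂ ∈ IPCSet (concatIP L M) s ↔
      ∃ a b, IsStdIP a ∧ IsStdIP b ∧ concatIP a b = s ∧
        A₁ ∈ IPCSet L a ∧ A₂ ∈ IPCSet M b := by
  have hLu := hL.sUnion_eq
  have hMu := hM.sUnion_eq
  have hsub : joinSet (⋃₀ L).ncard A₁ A₂ ⊆ ⋃₀ concatIP L M := by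
    rw [concatIP, sUnion_union_shiftIP]
    exact union_subset_union h1 (image_mono h2)
  have h1' : A₁ ⊆ Icc 1 (⋃₀ L).ncard := hLu ▸ h1
  have h2' : ∀ y ∈ A₂, 1 ≤ y := fun y hy => (hMu ▸ h2 hy : y ∈ Icc 1 (⋃₀ M).ncard).1
  have hr1 := sUnion_restrictIP h1
  have hr2 := sUnion_restrictIP h2
  have hf1 : A₁.Finite := hL.1.1.subset h1
  have hf2 : A₂.Finite := hM.1.1.subset h2
  have key : stdIP (restrictIP (concatIP L M) (joinSet (⋃₀ L).ncard A₁ A₂))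
      = concatIP (stdIP (restrictIP L A₁)) (stdIP (restrictIP M A₂)) := by
    rw [concatIP, restrictIP_concat hLu.subset hM.1.2.1 h1' h2',
      stdIP_union_shift (by rwa [hr1]) (by rwa [hr2]) (by rwa [hr2])]
  simp only [IPCSet, mem_ofPred_eq, key, hsub, h1, h2, true_and]
  exact IPle_concat_iff hs (sUnion_stdIP (by rwa [hr1])) (sUnion_stdIP (by rwa [hr2]))

/-- Chen's identity for the interval-partition signature. -/
theorem IPC_chen (s L M : Set (Set ℕ))
    (hs : IsStdIP s) (hL : IsStdIP L) (hM : IsStdIP M) :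
    IPC (concatIP L M) s
      = ∑ᶠ q ∈ {q : Set (Set ℕ) × Set (Set ℕ) |
            IsStdIP q.1 ∧ IsStdIP q.2 ∧ concatIP q.1 q.2 = s},
          IPC L q.1 * IPC M q.2 := by
  set F := {q : Set (Set ℕ) × Set (Set ℕ) |
            IsStdIP q.1 ∧ IsStdIP q.2 ∧ concatIP q.1 q.2 = s} with hF
  have hinj : InjOn (fun q : Set (Set ℕ) × Set (Set ℕ) => (⋃₀ q.1).ncard) F := by
    rintro q ⟨h1, h2, h3⟩ r ⟨h4, h5, h6⟩ h
    obtain ⟨h7, h8⟩ := concat_injective h1 h2 h4 h5 (h3.trans h6.symm) h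
    exact Prod.ext h7 h8
  have hFfin : F.Finite := by
    refine Finite.of_finite_image ((finite_Iic (⋃₀ s).ncard).subset ?_) hinj
    rintro _ ⟨q, ⟨-, -, h⟩, rfl⟩
    refine ncard_le_ncard (sUnion_mono ?_) hs.1.1
    rw [← h]
    exact subset_union_left
  let X : Set (Set ℕ) × Set (Set ℕ) → Set (Set ℕ × Set ℕ) :=
    fun q => IPCSet L q.1 ×ˢ IPCSet M q.2
  have hXfin : ∀ q ∈ F, (X q).Finite :=
    fun q _ => (finite_IPCSet hL.1.1).prod (finite_IPCSet hM.1.1)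
  have hdisj : F.PairwiseDisjoint X := by
    intro q hq r hr hne
    refine Set.disjoint_left.2 fun A hAq hAr => hne (hinj hq hr ?_)
    exact (ncard_of_mem_IPCSet hL.1.1 hAq.1).trans (ncard_of_mem_IPCSet hL.1.1 hAr.1).symm
  have hLu := hL.sUnion_eq
  have hMu := hM.sUnion_eq
  have hM1 : ∀ A ⊆ ⋃₀ M, ∀ y ∈ A, 1 ≤ y :=
    fun A hA y hy => (hMu ▸ hA hy : y ∈ Icc 1 (⋃₀ M).ncard).1
  have himg : IPCSet (concatIP L M) s
      = (fun A : Set ℕ × Set ℕ => joinSet (⋃₀ L).ncard A.1 A.2) '' ⋃ q ∈ F, X q := by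
    ext A
    constructor
    · intro hA
      have hA' := hA.1
      rw [concatIP, sUnion_union_shiftIP] at hA'
      obtain ⟨A₁, A₂, h1, h2, rfl⟩ : ∃ A₁ A₂, A₁ ⊆ ⋃₀ L ∧ A₂ ⊆ ⋃₀ M ∧
          A = joinSet (⋃₀ L).ncard A₁ A₂ := by
        refine ⟨A ∩ ⋃₀ L, {y ∈ ⋃₀ M | y + (⋃₀ L).ncard ∈ A}, inter_subset_right,
          sep_subset _ _, ?_⟩
        ext x
        constructor
        · intro hx
          rcases hA' hx with h | ⟨y, hy, rfl⟩
          · exact Or.inl ⟨hx, h⟩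
          · exact Or.inr ⟨y, ⟨hy, hx⟩, rfl⟩
        · rintro (h | ⟨y, hy, rfl⟩)
          · exact h.1
          · exact hy.2
      obtain ⟨a, b, ha, hb, hab, hAa, hAb⟩ := (joinSet_mem_IPCSet_iff hs hL hM h1 h2).1 hA
      exact ⟨(A₁, A₂), mem_biUnion (x := (a, b)) ⟨ha, hb, hab⟩ ⟨hAa, hAb⟩, rfl⟩
    · rintro ⟨⟨A₁, A₂⟩, hA, rfl⟩
      obtain ⟨⟨a, b⟩, ⟨ha, hb, hab⟩, hAa, hAb⟩ := mem_iUnion₂.1 hA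
      exact (joinSet_mem_IPCSet_iff hs hL hM hAa.1 hAb.1).2 ⟨a, b, ha, hb, hab, hAa, hAb⟩
  have hjoin : InjOn (fun A : Set ℕ × Set ℕ => joinSet (⋃₀ L).ncard A.1 A.2)
      (⋃ q ∈ F, X q) := by
    rintro ⟨A₁, A₂⟩ hA ⟨B₁, B₂⟩ hB h
    obtain ⟨q, -, ⟨hA1, -⟩, ⟨hA2, -⟩⟩ := mem_iUnion₂.1 hA
    obtain ⟨r, -, ⟨hB1, -⟩, ⟨hB2, -⟩⟩ := mem_iUnion₂.1 hB
    simp only at h hA1 hA2 hB1 hB2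
    have e1 : A₁ = B₁ := by
      ext x
      by_cases hx : x ≤ (⋃₀ L).ncard
      · rw [← mem_joinSet_left (hM1 A₂ hA2) hx, h, mem_joinSet_left (hM1 B₂ hB2) hx]
      · have : x ∉ ⋃₀ L := fun hxL => hx (hLu ▸ hxL : x ∈ Icc 1 (⋃₀ L).ncard).2
        exact ⟨fun h => (this (hA1 h)).elim, fun h => (this (hB1 h)).elim⟩
    have e2 : A₂ = B₂ := by
      ext x
      by_cases hx : 1 ≤ x
      · rw [← mem_joinSet_right (hLu ▸ hA1) hx, h, mem_joinSet_right (hLu ▸ hB1) hx]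
      · exact ⟨fun h => (hx (hM1 _ hA2 _ h)).elim, fun h => (hx (hM1 _ hB2 _ h)).elim⟩
    rw [e1, e2]
  calc IPC (concatIP L M) s = (⋃ q ∈ F, X q).ncard := by
        change (IPCSet (concatIP L M) s).ncard = _
        rw [himg, hjoin.ncard_image]
    _ = ∑ᶠ q ∈ F, (X q).ncard := hFfin.ncard_biUnion hXfin hdisj
    _ = ∑ᶠ q ∈ F, IPC L q.1 * IPC M q.2 :=
        finsum_mem_congr rfl fun q _ => ncard_prod
end

section
/- Invariance under coarsening: let 𝔰, 𝔱, 𝔤, 𝔥 ∈ IPs with 𝔥 ≥ 𝔤. Then {(A,A') : A ∪ A' = ⋃𝔥, std(𝔥(A)) ≥ 𝔰, std(𝔥(A')) ≥ 𝔱, 𝔥(A)_𝔰 ⋎ 𝔥(A')_𝔱 = 𝔤} = {(A,A') : A ∪ A' = ⋃𝔤, std(𝔤(A)) ≥ 𝔰, std(𝔤(A')) ≥ 𝔱, 𝔤(A)_𝔰 ⋎ 𝔤(A')_𝔱 = 𝔤}. -/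
/-!
A refinement `Q` of an interval partition of `A` with `stdIP Q = s` is determined by `A` and `s`
alone: it is the pullback of `s` along the order isomorphism `stdMap A` from `A` to `{1, …, |A|}`
(`eq_pullIP`). Hence `refineTo (restrictIP h A) s` and `refineTo (restrictIP g A) s` are the same
family whenever both refinements exist, and existence is equivalent to the order condition on `s`
(`pullIP_spec`, `IPle_stdIP_of_refines`). It remains to compare the conditions
`pullIP A s ≤ h(A)` and `pullIP A s ≤ g(A)`. The second implies the first because `g ≤ h`.
Conversely, if the two pullbacks glue to `g`, then each of their blocks lies in a block of `g`;
it also lies in a clique of `A`, so it lies in a block of `g(A)`.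
-/

open Set

/-- The set of covering pairs `(A, A')` of the ground set of `h` whose restricted
and refined partitions glue to `g`. -/
noncomputable def decompSet (s t h g : Set (Set ℕ)) : Set (Set ℕ × Set ℕ) :=
  {p | p.1 ∪ p.2 = ⋃₀ h ∧
    IPle s (stdIP (restrictIP h p.1)) ∧ IPle t (stdIP (restrictIP h p.2)) ∧
    glue (refineTo (restrictIP h p.1) s) (refineTo (restrictIP h p.2) t) = g}

/-! ### Refinements as pullbacks along the standardization map -/

/-- The pullback of the family `s` to `A` along `stdMap A`. -/
def pullIP (A : Set ℕ) (s : Set (Set ℕ)) : Set (Set ℕ) :=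
  (fun B => A ∩ stdMap A ⁻¹' B) '' s

lemma stdMap_mono {A : Set ℕ} (hA : A.Finite) : Monotone (stdMap A) := fun _ _ hxy =>
  Set.ncard_le_ncard (fun _ hz => ⟨hz.1, hz.2.trans hxy⟩) (hA.subset fun _ hz => hz.1)

lemma stdMap_injOn {A : Set ℕ} (hA : A.Finite) : Set.InjOn (stdMap A) A := by
  have key : ∀ x ∈ A, ∀ y ∈ A, x < y → stdMap A x < stdMap A y := by
    intro x hx y hy hxy
    apply Set.ncard_lt_ncard _ (hA.subset fun _ hz => hz.1)
    refine ⟨fun _ hz => ⟨hz.1, hz.2.trans hxy.le⟩, fun hsub => ?_⟩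
    have := (hsub ⟨hy, le_rfl⟩).2
    omega
  intro x hx y hy hxy
  rcases lt_trichotomy x y with hlt | heq | hlt
  · have := key x hx y hy hlt
    omega
  · exact heq
  · have := key y hy x hx hlt
    omega

lemma inter_preimage_image {A C : Set ℕ} (hA : A.Finite) (hC : C ⊆ A) :
    A ∩ stdMap A ⁻¹' (stdMap A '' C) = C := by
  ext x
  constructor
  · rintro ⟨hx, y, hy, hyx⟩
    rwa [← stdMap_injOn hA (hC hy) hx hyx]
  · exact fun hx => ⟨hC hx, x, hx, rfl⟩

lemma image_inter_preimage {A B : Set ℕ} (hB : B ⊆ stdMap A '' A) :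
    stdMap A '' (A ∩ stdMap A ⁻¹' B) = B := by
  ext x
  constructor
  · rintro ⟨y, hy, rfl⟩
    exact hy.2
  · intro hx
    obtain ⟨y, hy, rfl⟩ := hB hx
    exact ⟨y, ⟨hy, hx⟩, rfl⟩

lemma sUnion_stdIP_s13 (P : Set (Set ℕ)) : ⋃₀ stdIP P = stdMap (⋃₀ P) '' ⋃₀ P := by
  simp only [stdIP, Set.sUnion_image, Set.sUnion_eq_biUnion (s := P), Set.image_iUnion]

lemma sUnion_pullIP {A : Set ℕ} {s : Set (Set ℕ)} (hs : ⋃₀ s = stdMap A '' A) :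
    ⋃₀ pullIP A s = A := by
  ext x
  constructor
  · rintro ⟨_, ⟨B, _, rfl⟩, hx⟩
    exact hx.1
  · intro hx
    have hmem : stdMap A x ∈ ⋃₀ s := hs ▸ Set.mem_image_of_mem _ hx
    obtain ⟨B, hB, hxB⟩ := hmem
    exact ⟨_, ⟨B, hB, rfl⟩, hx, hxB⟩

/-- Uniqueness of the refinement with a given standardization. -/
lemma eq_pullIP {Q s : Set (Set ℕ)} (hfin : (⋃₀ Q).Finite) (hQ : stdIP Q = s) :
    Q = pullIP (⋃₀ Q) s := by
  subst hQ
  rw [pullIP, stdIP, Set.image_image]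
  conv_lhs => rw [← Set.image_id Q]
  exact Set.image_congr fun C hC => (inter_preimage_image hfin (Set.subset_sUnion_of_mem hC)).symm

/-- Existence of the refinement with a given standardization. Convexity of the blocks of the
pullback is inherited from the blocks of `P` and of `s`. -/
lemma pullIP_spec {P s : Set (Set ℕ)} (hfin : (⋃₀ P).Finite)
    (hP : ∀ B ∈ P, IsIntervalBlock B) (hs : IsIntervalPartition s) (hle : IPle s (stdIP P)) :
    IsIntervalPartition (pullIP (⋃₀ P) s) ∧ IPle (pullIP (⋃₀ P) s) P ∧
      stdIP (pullIP (⋃₀ P) s) = s := by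
  have hground : ⋃₀ s = stdMap (⋃₀ P) '' ⋃₀ P := hle.1.trans (sUnion_stdIP_s13 P)
  have hU := sUnion_pullIP hground
  have hsub : ∀ B ∈ s, B ⊆ stdMap (⋃₀ P) '' ⋃₀ P := fun B hB =>
    hground ▸ Set.subset_sUnion_of_mem hB
  have hblock : ∀ B ∈ s, ∃ C ∈ P, ⋃₀ P ∩ stdMap (⋃₀ P) ⁻¹' B ⊆ C := by
    intro B hB
    obtain ⟨_, ⟨C, hC, rfl⟩, hBC⟩ := hle.2 B hB
    refine ⟨C, hC, ?_⟩
    rw [← inter_preimage_image hfin (Set.subset_sUnion_of_mem hC)]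
    exact Set.inter_subset_inter_right _ (Set.preimage_mono hBC)
  refine ⟨⟨hU.symm ▸ hfin, ?_, ?_⟩, ⟨hU, ?_⟩, ?_⟩
  · rintro _ ⟨B, hB, rfl⟩
    obtain ⟨C, hC, hBC⟩ := hblock B hB
    refine ⟨?_, fun x hx => (hP C hC).2.1 x (hBC hx), ?_⟩
    · have hne := (hs.2.1 B hB).1
      rw [← image_inter_preimage (hsub B hB)] at hne
      exact hne.of_image
    · intro x hx z hz y hxy hyz
      have hyC := (hP C hC).2.2 x (hBC hx) z (hBC hz) y hxy hyz
      exact ⟨⟨C, hC, hyC⟩, (hs.2.1 B hB).2.2 _ hx.2 _ hz.2 _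
        (stdMap_mono hfin hxy) (stdMap_mono hfin hyz)⟩
  · rintro _ ⟨B, hB, rfl⟩ _ ⟨C, hC, rfl⟩ hne
    have hBC : B ≠ C := fun h => hne (by rw [h])
    have hdisj := hs.2.2 B hB C hC hBC
    refine Set.eq_empty_of_forall_notMem fun x hx => ?_
    have hmem : stdMap (⋃₀ P) x ∈ B ∩ C := ⟨hx.1.2, hx.2.2⟩
    rw [hdisj] at hmem
    exact hmem
  · rintro _ ⟨B, hB, rfl⟩
    exact hblock B hB
  · rw [stdIP, hU, pullIP, Set.image_image]
    conv_rhs => rw [← Set.image_id s]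
    exact Set.image_congr fun B hB => image_inter_preimage (hsub B hB)

lemma refineTo_eq {P s : Set (Set ℕ)} (hfin : (⋃₀ P).Finite)
    (hP : ∀ B ∈ P, IsIntervalBlock B) (hs : IsIntervalPartition s) (hle : IPle s (stdIP P)) :
    refineTo P s = pullIP (⋃₀ P) s := by
  have hex : ∃ Q : Set (Set ℕ), IsIntervalPartition Q ∧ IPle Q P ∧ stdIP Q = s :=
    ⟨_, pullIP_spec hfin hP hs hle⟩
  rw [refineTo, dif_pos hex]
  obtain ⟨h1, h2, h3⟩ := hex.choose_spec
  have heq := eq_pullIP h1.1 h3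
  rwa [h2.1] at heq

lemma IPle_stdIP_of_refines {P Q s : Set (Set ℕ)} (hle : IPle Q P) (hQ : stdIP Q = s) :
    IPle s (stdIP P) := by
  subst hQ
  refine ⟨by rw [sUnion_stdIP_s13, sUnion_stdIP_s13, hle.1], ?_⟩
  rintro _ ⟨B, hB, rfl⟩
  obtain ⟨C, hC, hBC⟩ := hle.2 B hB
  refine ⟨_, ⟨C, hC, rfl⟩, ?_⟩
  simp only [hle.1]
  exact Set.image_mono hBC

/-! ### Cliques and restricted partitions -/

lemma uIcc_subset_of_cliqueRel {A : Set ℕ} {x y : ℕ} (h : cliqueRel A x y) :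
    x = y ∨ Set.uIcc x y ⊆ A := by
  induction h with
  | rel x y h =>
    obtain ⟨hx, hy, rfl⟩ := h
    right
    intro z hz
    rw [Set.mem_uIcc] at hz
    have : z = x ∨ z = x + 1 := by omega
    rcases this with rfl | rfl <;> assumption
  | refl x => exact Or.inl rfl
  | symm x y _ ih => rwa [eq_comm, Set.uIcc_comm]
  | trans x y z _ _ ih1 ih2 =>
    rcases ih1 with rfl | h1
    · exact ih2
    · rcases ih2 with rfl | h2
      · exact Or.inr h1
      · exact Or.inr (Set.uIcc_subset_uIcc_union_uIcc.trans (Set.union_subset h1 h2))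

lemma cliqueRel_of_Icc_subset {A : Set ℕ} {x y : ℕ} (hxy : x ≤ y) (h : Set.Icc x y ⊆ A) :
    cliqueRel A x y := by
  induction y, hxy using Nat.le_induction with
  | base => exact Relation.EqvGen.refl x
  | succ y hxy ih =>
    refine Relation.EqvGen.trans _ y _ (ih fun z hz => h ⟨hz.1, hz.2.trans (Nat.le_succ y)⟩) ?_
    exact Relation.EqvGen.rel _ _ ⟨h ⟨hxy, Nat.le_succ y⟩, h ⟨by omega, le_rfl⟩, rfl⟩

lemma cliques_convex {A c : Set ℕ} (hc : c ∈ cliques A) {x y z : ℕ} (hx : x ∈ c) (hz : z ∈ c)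
    (hxy : x ≤ y) (hyz : y ≤ z) : y ∈ c := by
  obtain ⟨a, ha, rfl⟩ := hc
  have hxz : cliqueRel A x z := Relation.EqvGen.trans _ _ _ (Relation.EqvGen.symm _ _ hx.2) hz.2
  have hsub : Set.Icc x z ⊆ A := by
    rcases uIcc_subset_of_cliqueRel hxz with rfl | h
    · rw [Set.Icc_self]
      exact Set.singleton_subset_iff.2 hx.1
    · exact Set.Icc_subset_uIcc.trans h
  exact ⟨hsub ⟨hxy, hyz⟩, Relation.EqvGen.trans _ _ _ hx.2
    (cliqueRel_of_Icc_subset hxy ((Set.Icc_subset_Icc_right hyz).trans hsub))⟩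

lemma exists_clique_of_intervalBlock {A B : Set ℕ} (hB : IsIntervalBlock B) (hBA : B ⊆ A) :
    ∃ c ∈ cliques A, B ⊆ c := by
  obtain ⟨x, hx⟩ := hB.1
  refine ⟨_, ⟨x, hBA hx, rfl⟩, fun y hy => ⟨hBA hy, ?_⟩⟩
  rcases le_total x y with h | h
  · exact cliqueRel_of_Icc_subset h fun z hz => hBA (hB.2.2 x hx y hy z hz.1 hz.2)
  · exact Relation.EqvGen.symm _ _
      (cliqueRel_of_Icc_subset h fun z hz => hBA (hB.2.2 y hy x hx z hz.1 hz.2))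

lemma restrictIP_block {P : Set (Set ℕ)} {A : Set ℕ} (hP : IsIntervalPartition P) :
    ∀ B ∈ restrictIP P A, IsIntervalBlock B := by
  rintro _ ⟨hne, B, hB, c, hc, rfl⟩
  refine ⟨Set.nonempty_iff_ne_empty.2 hne, fun x hx => (hP.2.1 B hB).2.1 x hx.1, ?_⟩
  intro x hx z hz y hxy hyz
  exact ⟨(hP.2.1 B hB).2.2 x hx.1 z hz.1 y hxy hyz, cliques_convex hc hx.2 hz.2 hxy hyz⟩

/-- An interval partition of `A` refines `P(A)` as soon as each of its blocks lies in a block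
of `P`. -/
lemma IPle_restrictIP {P Q : Set (Set ℕ)} {A : Set ℕ} (hQ : IsIntervalPartition Q)
    (hA : A ⊆ ⋃₀ P) (hQA : ⋃₀ Q = A) (hblock : ∀ B ∈ Q, ∃ C ∈ P, B ⊆ C) :
    IPle Q (restrictIP P A) := by
  refine ⟨by rw [sUnion_restrictIP hA, hQA], fun B hB => ?_⟩
  obtain ⟨C, hC, hBC⟩ := hblock B hB
  obtain ⟨c, hc, hBc⟩ := exists_clique_of_intervalBlock (hQ.2.1 B hB)
    (hQA ▸ Set.subset_sUnion_of_mem hB : B ⊆ A)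
  exact ⟨C ∩ c, ⟨((hQ.2.1 B hB).1.mono (Set.subset_inter hBC hBc)).ne_empty, C, hC, c, hc, rfl⟩,
    Set.subset_inter hBC hBc⟩

/-! ### Comparison of the two restrictions -/

lemma subset_glue_block {P Q : Set (Set ℕ)} {B : Set ℕ} (hB : B ∈ P ∪ Q) :
    ∃ C ∈ glue P Q, B ⊆ C :=
  ⟨_, ⟨B, hB, rfl⟩, Set.subset_sUnion_of_mem ⟨hB, Relation.EqvGen.refl B⟩⟩

/-- If `s ≤ std(P(A))`, then `refineTo (restrictIP P A) s` is the pullback of `s` to `A`, an interval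
partition of `A` with standardization `s` whose blocks lie in blocks of `P`. -/
lemma restrict_data {P s : Set (Set ℕ)} {A : Set ℕ} (hP : IsIntervalPartition P)
    (hs : IsIntervalPartition s) (hA : A ⊆ ⋃₀ P) (hle : IPle s (stdIP (restrictIP P A))) :
    IsIntervalPartition (pullIP A s) ∧ ⋃₀ pullIP A s = A ∧ stdIP (pullIP A s) = s ∧
      (∀ B ∈ pullIP A s, ∃ C ∈ P, B ⊆ C) ∧ refineTo (restrictIP P A) s = pullIP A s := by
  have hU := sUnion_restrictIP hA
  have hfin : (⋃₀ restrictIP P A).Finite := hU.symm ▸ hP.1.subset hA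
  have h1 := pullIP_spec hfin (restrictIP_block hP) hs hle
  have h2 := refineTo_eq hfin (restrictIP_block hP) hs hle
  rw [hU] at h1 h2
  refine ⟨h1.1, h1.2.1.1.trans hU, h1.2.2, fun B hB => ?_, h2⟩
  obtain ⟨_, ⟨_, C, hC, c, _, rfl⟩, hBC⟩ := h1.2.1.2 B hB
  exact ⟨C, hC, hBC.trans Set.inter_subset_left⟩

/-- Passing from `P` to another interval partition `R` does not affect the restricted and refined
partition, provided its blocks still lie in blocks of `R`. -/
lemma restrict_transfer {P R s : Set (Set ℕ)} {A : Set ℕ} (hP : IsIntervalPartition P)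
    (hR : IsIntervalPartition R) (hs : IsIntervalPartition s) (hA : A ⊆ ⋃₀ P) (hAR : A ⊆ ⋃₀ R)
    (hle : IPle s (stdIP (restrictIP P A)))
    (hblock : ∀ B ∈ refineTo (restrictIP P A) s, ∃ C ∈ R, B ⊆ C) :
    IPle s (stdIP (restrictIP R A)) ∧
      refineTo (restrictIP R A) s = refineTo (restrictIP P A) s := by
  obtain ⟨h1, h2, h3, _, h5⟩ := restrict_data hP hs hA hle
  rw [h5] at hblock ⊢
  have hle' := IPle_stdIP_of_refines (IPle_restrictIP h1 hAR h2 hblock) h3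
  exact ⟨hle', (restrict_data hR hs hAR hle').2.2.2.2⟩

/-- invariance under coarsening. -/
theorem decompSet_invariance (s t g h : Set (Set ℕ))
    (hs : IsStdIP s) (ht : IsStdIP t) (hg : IsStdIP g) (hh : IsStdIP h)
    (hge : IPle g h) :
    decompSet s t h g = decompSet s t g g := by
  ext ⟨A, A'⟩
  constructor
  · rintro ⟨hU, h1, h2, h3⟩
    dsimp only at hU h1 h2 h3
    have hA : A ⊆ ⋃₀ h := hU ▸ Set.subset_union_left
    have hA' : A' ⊆ ⋃₀ h := hU ▸ Set.subset_union_right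
    obtain ⟨e1, e2⟩ := restrict_transfer hh.1 hg.1 hs.1 hA (hge.1 ▸ hA) h1
      fun B hB => by
        obtain ⟨C, hC, hBC⟩ := subset_glue_block (Q := refineTo (restrictIP h A') t) (Or.inl hB)
        exact ⟨C, h3 ▸ hC, hBC⟩
    obtain ⟨f1, f2⟩ := restrict_transfer hh.1 hg.1 ht.1 hA' (hge.1 ▸ hA') h2
      fun B hB => by
        obtain ⟨C, hC, hBC⟩ := subset_glue_block (P := refineTo (restrictIP h A) s) (Or.inr hB)
        exact ⟨C, h3 ▸ hC, hBC⟩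
    exact ⟨hU.trans hge.1.symm, e1, f1, by dsimp only; rw [e2, f2, h3]⟩
  · rintro ⟨hU, h1, h2, h3⟩
    dsimp only at hU h1 h2 h3
    have hA : A ⊆ ⋃₀ g := hU ▸ Set.subset_union_left
    have hA' : A' ⊆ ⋃₀ g := hU ▸ Set.subset_union_right
    have coarsen : ∀ {u : Set (Set ℕ)} {D : Set ℕ}, IsIntervalPartition u → D ⊆ ⋃₀ g →
        IPle u (stdIP (restrictIP g D)) → IPle u (stdIP (restrictIP h D)) ∧
          refineTo (restrictIP h D) u = refineTo (restrictIP g D) u := by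
      intro u D hu hD hle
      obtain ⟨_, _, _, k4, k5⟩ := restrict_data hg.1 hu hD hle
      refine restrict_transfer hg.1 hh.1 hu hD (hge.1 ▸ hD) hle fun B hB => ?_
      obtain ⟨C, hC, hBC⟩ := k4 B (k5 ▸ hB)
      obtain ⟨E, hE, hCE⟩ := hge.2 C hC
      exact ⟨E, hE, hBC.trans hCE⟩
    obtain ⟨e1, e2⟩ := coarsen hs.1 hA h1
    obtain ⟨f1, f2⟩ := coarsen ht.1 hA' h2
    exact ⟨hU.trans hge.1, e1, f1, by dsimp only; rw [e2, f2, h3]⟩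
end
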